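/- Let q be a real number with 0 < q and q ≠ 1, let h₁, h₂, l₁, l₂, α₁, α₂ be real numbers, t₁, t₂ nonzero reals, and set λ = (h₁+h₂-l₁-l₂-α₁-α₂+1)/2. Let (i,i') = (1,2) or (i,i') = (2,1). Assume λ + α₁ = -N for some positive integer N (so (q^{λ+α₁};q)_n = 0 for all n > N and the series below is a finite sum), and assume q^{h_i-l_i+n} ≠ 1 and q^{h_i-l_{i'}+n}·t_i/t_{i'} ≠ 1 for all integers 1 ≤ n ≤ N. Then the function g(x) = x^λ · Σ_{n=0}^{N} [(q^{λ+α₁};q)_n (q^{λ+α₂};q)_n / ((q^{h_i-l_i+1};q)_n (q^{h_i-l_{i'}+1}·t_i/t_{i'};q)_n (q;q)_n)] · (q^{h_i+1/2}t_i/x ; q)_n · (x/(q^{h_{i'}-1/2}t_{i'}))^n satisfies the variant of the q-hypergeometric equation of degree two for all x > 0. -/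

import Mathlib

/-- The finite q-shifted factorial `(a;q)_n = ∏_{i=0}^{n-1} (1 - a q^i)`. -/
noncomputable def qPoch (q a : ℝ) (n : ℕ) : ℝ :=
  ∏ i ∈ Finset.range n, (1 - a * q ^ i)

/-- The variant of the q-hypergeometric equation of degree two (for `x > 0`). -/
def qHyperVar2 (q h₁ h₂ l₁ l₂ α₁ α₂ t₁ t₂ : ℝ) (g : ℝ → ℝ) : Prop :=
  ∀ x : ℝ, 0 < x →
    (x - q ^ (h₁ + 1/2) * t₁) * (x - q ^ (h₂ + 1/2) * t₂) * g (x / q)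
    + q ^ (α₁ + α₂) * (x - q ^ (l₁ - 1/2) * t₁) * (x - q ^ (l₂ - 1/2) * t₂) * g (q * x)
    - ((q ^ α₁ + q ^ α₂) * x ^ 2
        + (-(q ^ ((h₁ + h₂ + l₁ + l₂ + α₁ + α₂) / 2))
            * ((q ^ (-h₂) + q ^ (-l₂)) * t₁ + (q ^ (-h₁) + q ^ (-l₁)) * t₂)) * x
        + q ^ ((h₁ + h₂ + l₁ + l₂ + α₁ + α₂) / 2) * (q ^ (1/2 : ℝ) + q ^ (-1/2 : ℝ)) * t₁ * t₂)
      * g x = 0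

/-!
Dividing a solution by `x ^ λ` turns the equation into `L S = 0`, where
`L S(x) = (x - A)(x - B)(S(x/q) - S(x)) + ab(x - C)(x - D)(S(qx) - S(x)) + (1 - a)(1 - b)x² S(x)`,
with `a = q^(λ+α₁)`, `b = q^(λ+α₂)`, the roots `A, B, C, D` of the two quadratic coefficients, and
`AB = abqCD`. In the basis `(x - A)(x - Aq)⋯(x - Aq^(n-1))` the operator `x⁻² L` is bidiagonal, so
`L S = 0` is a first-order recurrence for the coefficients of `S`; the `q`-hypergeometric
coefficients solve it, and the sum stops at `N` because `a q^N = 1`.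
-/

section Operator

variable {K : Type*} [Field K]

/-- The `q`-analogue `(x - A)(x - Aq)⋯(x - Aq^(n-1))` of the power `(x - A)^n`. It replaces the
factor `(A/x;q)_n x^n` of the series by a polynomial in `x`. -/
def qSubPow (q A : K) (n : ℕ) (x : K) : K :=
  ∏ i ∈ Finset.range n, (x - A * q ^ i)

/-- The `q`-difference operator of the degree two equation, gauged so that the local exponents at
infinity are carried by `a` and `b`. The differences `f (x / q) - f x` and `f (q * x) - f x` absorb
the linear and constant terms of the middle coefficient of the equation. -/
def qHyperOp (q a b A B C D : K) : (K → K) →ₗ[K] K → K where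
  toFun f x := (x - A) * (x - B) * (f (x / q) - f x)
    + a * b * (x - C) * (x - D) * (f (q * x) - f x) + (1 - a) * (1 - b) * x ^ 2 * f x
  map_add' f g := by
    ext x
    simp only [Pi.add_apply]
    ring
  map_smul' r f := by
    ext x
    simp only [Pi.smul_apply, smul_eq_mul, RingHom.id_apply]
    ring

theorem qHyperOp_apply (q a b A B C D : K) (f : K → K) (x : K) :
    qHyperOp q a b A B C D f x = (x - A) * (x - B) * (f (x / q) - f x)
      + a * b * (x - C) * (x - D) * (f (q * x) - f x) + (1 - a) * (1 - b) * x ^ 2 * f x :=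
  rfl

theorem qSubPow_zero (q A x : K) : qSubPow q A 0 x = 1 :=
  Finset.prod_range_zero _

theorem qSubPow_succ (q A : K) (n : ℕ) (x : K) :
    qSubPow q A (n + 1) x = qSubPow q A n x * (x - A * q ^ n) :=
  Finset.prod_range_succ _ _

theorem qSubPow_mul_left_succ (q A : K) (n : ℕ) (x : K) :
    qSubPow q A (n + 1) (q * x) = q ^ n * (q * x - A) * qSubPow q A n x := by
  induction n with
  | zero => simp [qSubPow]
  | succ n ih =>
    rw [qSubPow_succ, ih, qSubPow_succ]
    ring

theorem sub_mul_qSubPow_div {q : K} (hq : q ≠ 0) (A : K) (n : ℕ) (x : K) :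
    (x - A) * qSubPow q A n (x / q) = qSubPow q A (n + 1) x / q ^ n := by
  have h := qSubPow_mul_left_succ q A n (x / q)
  rw [mul_div_cancel₀ x hq] at h
  rw [h]
  field_simp

variable {q a b A B C D : K}

theorem qHyperOp_qSubPow_zero (x : K) :
    qHyperOp q a b A B C D (qSubPow q A 0) x = (1 - a) * (1 - b) * x ^ 2 := by
  simp [qHyperOp_apply, qSubPow_zero]

theorem qHyperOp_qSubPow_succ (hq : q ≠ 0) (hC : C ≠ 0) (hD : D ≠ 0)
    (hAB : A * B = a * b * q * C * D) (n : ℕ) (x : K) :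
    qHyperOp q a b A B C D (qSubPow q A (n + 1)) x =
      x ^ 2 * ((1 - a * q ^ (n + 1)) * (1 - b * q ^ (n + 1)) / q ^ (n + 1)
          * qSubPow q A (n + 1) x
        - B * (1 - A / C * q ^ n) * (1 - A / D * q ^ n) * (1 - q ^ (n + 1)) / q ^ (n + 1)
          * qSubPow q A n x) := by
  have lowering : B * (1 - A / C * q ^ n) * (1 - A / D * q ^ n) =
      B - a * b * q * q ^ n * (C + D) + a * b * q * A * (q ^ n) ^ 2 := by
    field_simp
    linear_combination (A * q ^ n - C - D) * q ^ n * hAB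
  have backward : (x - A) * (qSubPow q A (n + 1) (x / q) - qSubPow q A (n + 1) x) =
      x * (1 - q ^ (n + 1)) / q ^ (n + 1) * (x - A * q ^ n) * qSubPow q A n x := by
    rw [mul_sub, sub_mul_qSubPow_div hq, qSubPow_succ q A (n + 1), qSubPow_succ]
    field_simp
    ring
  have forward : qSubPow q A (n + 1) (q * x) - qSubPow q A (n + 1) x =
      -(x * (1 - q ^ (n + 1))) * qSubPow q A n x := by
    rw [qSubPow_mul_left_succ, qSubPow_succ]
    ring
  rw [qHyperOp_apply, mul_right_comm, backward, forward, lowering, qSubPow_succ]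
  field_simp
  linear_combination x * qSubPow q A n x * (1 - q * q ^ n) * q ^ n * hAB

theorem qHyperOp_sum_smul_qSubPow (hq : q ≠ 0) (hC : C ≠ 0) (hD : D ≠ 0)
    (hAB : A * B = a * b * q * C * D) {c : ℕ → K} {N : ℕ}
    (hc : ∀ n < N, c (n + 1)
        * (B / q * (1 - A / C * q ^ n) * (1 - A / D * q ^ n) * (1 - q ^ (n + 1))) =
      c n * ((1 - a * q ^ n) * (1 - b * q ^ n))) (x : K) :
    qHyperOp q a b A B C D (∑ n ∈ Finset.range (N + 1), c n • qSubPow q A n) x =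
      x ^ 2 * (c N * ((1 - a * q ^ N) * (1 - b * q ^ N)) / q ^ N * qSubPow q A N x) := by
  induction N with
  | zero =>
    simp only [zero_add, Finset.sum_range_one, map_smul, Pi.smul_apply, smul_eq_mul,
      qHyperOp_qSubPow_zero, qSubPow_zero, pow_zero]
    ring
  | succ N ih =>
    rw [Finset.sum_range_succ, map_add, Pi.add_apply, ih fun n hn => hc n (by lia),
      map_smul, Pi.smul_apply, smul_eq_mul, qHyperOp_qSubPow_succ hq hC hD hAB,
      ← hc N N.lt_succ_self]
    field_simp
    ring

end Operator

theorem qPoch_succ (q a : ℝ) (n : ℕ) : qPoch q a (n + 1) = qPoch q a n * (1 - a * q ^ n) :=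
  Finset.prod_range_succ _ _

theorem qPoch_div_mul_pow {x : ℝ} (hx : x ≠ 0) (q A : ℝ) (n : ℕ) :
    qPoch q (A / x) n * x ^ n = qSubPow q A n x := by
  induction n with
  | zero => simp [qPoch, qSubPow]
  | succ n ih =>
    rw [qPoch_succ, qSubPow_succ, ← ih, pow_succ]
    field_simp

/-- The coefficient `(a;q)_n (b;q)_n / ((u;q)_n (v;q)_n (q;q)_n)` of the `q`-hypergeometric
series. -/
noncomputable def qHyperCoeff (q a b u v : ℝ) (n : ℕ) : ℝ :=
  qPoch q a n * qPoch q b n / (qPoch q u n * qPoch q v n * qPoch q q n)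

theorem qHyperCoeff_succ_mul {q a b u v : ℝ} {n : ℕ} (hu : u * q ^ n ≠ 1) (hv : v * q ^ n ≠ 1)
    (hq : q ^ (n + 1) ≠ 1) :
    qHyperCoeff q a b u v (n + 1)
        * ((1 - u * q ^ n) * (1 - v * q ^ n) * (1 - q ^ (n + 1))) =
      qHyperCoeff q a b u v n * ((1 - a * q ^ n) * (1 - b * q ^ n)) := by
  have hden : (1 - u * q ^ n) * (1 - v * q ^ n) * (1 - q ^ (n + 1)) ≠ 0 :=
    mul_ne_zero (mul_ne_zero (sub_ne_zero.2 hu.symm) (sub_ne_zero.2 hv.symm))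
      (sub_ne_zero.2 hq.symm)
  rw [← eq_div_iff hden, mul_div_assoc, qHyperCoeff, qHyperCoeff, div_mul_div_comm]
  simp only [qPoch_succ]
  ring

theorem sum_qHyperCoeff_eq_sum_smul_qSubPow {x : ℝ} (hx : x ≠ 0) (q a b u v A B : ℝ) (N : ℕ) :
    ∑ n ∈ Finset.range N, qHyperCoeff q a b u v n * qPoch q (A / x) n * (x / (B / q)) ^ n =
      (∑ n ∈ Finset.range N, (qHyperCoeff q a b u v n * (q / B) ^ n) • qSubPow q A n) x := by
  rw [Finset.sum_apply]
  refine Finset.sum_congr rfl fun n _ => ?_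
  rw [Pi.smul_apply, smul_eq_mul, ← qPoch_div_mul_pow hx, div_div_eq_mul_div, mul_div_assoc,
    mul_pow]
  ring

theorem qHyperOp_qHyperCoeff_sum_eq_zero {q a b A B C D : ℝ} {N : ℕ} (hq : 0 < q) (hq1 : q ≠ 1)
    (hB : B ≠ 0) (hC : C ≠ 0) (hD : D ≠ 0) (hAB : A * B = a * b * q * C * D)
    (ha : a * q ^ N = 1) (hAC : ∀ n < N, A / C * q ^ n ≠ 1) (hAD : ∀ n < N, A / D * q ^ n ≠ 1)
    (x : ℝ) :
    qHyperOp q a b A B C D (∑ n ∈ Finset.range (N + 1),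
      (qHyperCoeff q a b (A / C) (A / D) n * (q / B) ^ n) • qSubPow q A n) x = 0 := by
  rw [qHyperOp_sum_smul_qSubPow hq.ne' hC hD hAB, ha]
  · simp
  intro n hn
  have hqn : q ^ (n + 1) ≠ 1 := fun h =>
    hq1 ((pow_eq_one_iff_of_nonneg hq.le n.succ_ne_zero).1 h)
  have hcancel : (q / B) ^ (n + 1) * (B / q) = (q / B) ^ n := by
    rw [pow_succ, mul_assoc, ← inv_div q B, mul_inv_cancel₀ (div_ne_zero hq.ne' hB), mul_one]
  linear_combination qHyperCoeff q a b (A / C) (A / D) (n + 1)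
      * (1 - A / C * q ^ n) * (1 - A / D * q ^ n) * (1 - q ^ (n + 1)) * hcancel
    + (q / B) ^ n * qHyperCoeff_succ_mul (a := a) (b := b) (hAC n hn) (hAD n hn) hqn

section Equation

theorem qHyperVar2_swap {q h₁ h₂ l₁ l₂ α₁ α₂ t₁ t₂ : ℝ} {g : ℝ → ℝ}
    (h : qHyperVar2 q h₁ h₂ l₁ l₂ α₁ α₂ t₁ t₂ g) : qHyperVar2 q h₂ h₁ l₂ l₁ α₁ α₂ t₂ t₁ g := by
  intro x hx
  rw [show h₂ + h₁ + l₂ + l₁ + α₁ + α₂ = h₁ + h₂ + l₁ + l₂ + α₁ + α₂ by ring]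
  linear_combination h x hx

variable {q h₁ h₂ l₁ l₂ α₁ α₂ t₁ t₂ lam : ℝ}

theorem rpow_lam_mul_rpow_half_sum_mul_rpow (hq : 0 < q)
    (hlam : lam = (h₁ + h₂ - l₁ - l₂ - α₁ - α₂ + 1) / 2) (s : ℝ) :
    q ^ lam * q ^ ((h₁ + h₂ + l₁ + l₂ + α₁ + α₂) / 2) * q ^ s = q ^ (h₁ + h₂ + 1/2 + s) := by
  rw [← Real.rpow_add hq, ← Real.rpow_add hq, hlam]
  ring_nf

theorem rpow_lam_add_mul_rpow_lam_add_mul_rpow (hq : 0 < q)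
    (hlam : lam = (h₁ + h₂ - l₁ - l₂ - α₁ - α₂ + 1) / 2) (s : ℝ) :
    q ^ (lam + α₁) * q ^ (lam + α₂) * q ^ s = q ^ (h₁ + h₂ - l₁ - l₂ + 1 + s) := by
  rw [← Real.rpow_add hq, ← Real.rpow_add hq, hlam]
  ring_nf

theorem root_mul_root_eq (hq : 0 < q)
    (hlam : lam = (h₁ + h₂ - l₁ - l₂ - α₁ - α₂ + 1) / 2) :
    q ^ (h₁ + 1/2) * t₁ * (q ^ (h₂ + 1/2) * t₂) =
      q ^ (lam + α₁) * q ^ (lam + α₂) * q * (q ^ (l₁ - 1/2) * t₁) * (q ^ (l₂ - 1/2) * t₂) := by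
  have h : q ^ (lam + α₁) * q ^ (lam + α₂)
      * (q ^ (1 : ℝ) * (q ^ (l₁ - 1/2) * q ^ (l₂ - 1/2))) = q ^ (h₁ + 1/2) * q ^ (h₂ + 1/2) := by
    rw [← Real.rpow_add hq (l₁ - 1/2), ← Real.rpow_add hq 1,
      rpow_lam_add_mul_rpow_lam_add_mul_rpow hq hlam, ← Real.rpow_add hq]
    ring_nf
  rw [Real.rpow_one] at h
  linear_combination -t₁ * t₂ * h

theorem rpow_lam_mul_linear_coeff (hq : 0 < q)
    (hlam : lam = (h₁ + h₂ - l₁ - l₂ - α₁ - α₂ + 1) / 2) :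
    q ^ lam * (q ^ ((h₁ + h₂ + l₁ + l₂ + α₁ + α₂) / 2)
        * ((q ^ (-h₂) + q ^ (-l₂)) * t₁ + (q ^ (-h₁) + q ^ (-l₁)) * t₂)) =
      q ^ (h₁ + 1/2) * t₁ + q ^ (h₂ + 1/2) * t₂
        + q ^ (lam + α₁) * q ^ (lam + α₂) * (q ^ (l₁ - 1/2) * t₁ + q ^ (l₂ - 1/2) * t₂) := by
  simp only [mul_add, add_mul, ← mul_assoc, rpow_lam_mul_rpow_half_sum_mul_rpow hq hlam,
    rpow_lam_add_mul_rpow_lam_add_mul_rpow hq hlam]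
  ring_nf

theorem rpow_lam_mul_constant_coeff (hq : 0 < q)
    (hlam : lam = (h₁ + h₂ - l₁ - l₂ - α₁ - α₂ + 1) / 2) :
    q ^ lam * (q ^ ((h₁ + h₂ + l₁ + l₂ + α₁ + α₂) / 2)
        * (q ^ (1/2 : ℝ) + q ^ (-1/2 : ℝ)) * t₁ * t₂) =
      q ^ (h₁ + 1/2) * t₁ * (q ^ (h₂ + 1/2) * t₂)
        + q ^ (lam + α₁) * q ^ (lam + α₂) * (q ^ (l₁ - 1/2) * t₁) * (q ^ (l₂ - 1/2) * t₂) := by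
  have hAB : q ^ lam * q ^ ((h₁ + h₂ + l₁ + l₂ + α₁ + α₂) / 2) * q ^ (1/2 : ℝ) =
      q ^ (h₁ + 1/2) * q ^ (h₂ + 1/2) := by
    rw [rpow_lam_mul_rpow_half_sum_mul_rpow hq hlam, ← Real.rpow_add hq]
    ring_nf
  have hCD : q ^ lam * q ^ ((h₁ + h₂ + l₁ + l₂ + α₁ + α₂) / 2) * q ^ (-1/2 : ℝ) =
      q ^ (lam + α₁) * q ^ (lam + α₂) * (q ^ (l₁ - 1/2) * q ^ (l₂ - 1/2)) := by
    rw [rpow_lam_mul_rpow_half_sum_mul_rpow hq hlam, ← Real.rpow_add hq (l₁ - 1/2),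
      rpow_lam_add_mul_rpow_lam_add_mul_rpow hq hlam]
    ring_nf
  linear_combination t₁ * t₂ * hAB + t₁ * t₂ * hCD

theorem rpow_sub_half_mul_eq (hq : 0 < q) (h t : ℝ) :
    q ^ (h - 1/2) * t = q ^ (h + 1/2) * t / q := by
  rw [mul_div_right_comm, ← Real.rpow_sub_one hq.ne']
  ring_nf

theorem rpow_mul_div_eq_root_div_root (hq : 0 < q) (h l t t' : ℝ) :
    q ^ (h - l + 1) * t / t' = q ^ (h + 1/2) * t / (q ^ (l - 1/2) * t') := by
  rw [mul_div_mul_comm, ← Real.rpow_sub hq, mul_div_assoc]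
  ring_nf

theorem rpow_natCast_succ_mul_div_eq (hq : 0 < q) (h l t t' : ℝ) (n : ℕ) :
    q ^ (h - l + (n + 1 : ℕ)) * t / t' =
      q ^ (h + 1/2) * t / (q ^ (l - 1/2) * t') * q ^ n := by
  rw [← rpow_mul_div_eq_root_div_root hq, Nat.cast_succ, add_comm (n : ℝ), ← add_assoc,
    Real.rpow_add_natCast hq.ne']
  ring

theorem qHyperVar2_iff_qHyperOp_eq_zero {g S : ℝ → ℝ} (hq : 0 < q)
    (hlam : lam = (h₁ + h₂ - l₁ - l₂ - α₁ - α₂ + 1) / 2)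
    (hg : ∀ x, 0 < x → g x = x ^ lam * S x) :
    qHyperVar2 q h₁ h₂ l₁ l₂ α₁ α₂ t₁ t₂ g ↔
      ∀ x, 0 < x → qHyperOp q (q ^ (lam + α₁)) (q ^ (lam + α₂))
        (q ^ (h₁ + 1/2) * t₁) (q ^ (h₂ + 1/2) * t₂)
        (q ^ (l₁ - 1/2) * t₁) (q ^ (l₂ - 1/2) * t₂) S x = 0 := by
  refine forall₂_congr fun x hx => ?_
  have hL : q ^ lam ≠ 0 := (Real.rpow_pos_of_pos hq lam).ne'
  have hX : x ^ lam ≠ 0 := (Real.rpow_pos_of_pos hx lam).ne'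
  have leading : q ^ (lam + α₁) + q ^ (lam + α₂) = q ^ lam * (q ^ α₁ + q ^ α₂) := by
    rw [Real.rpow_add hq, Real.rpow_add hq, mul_add]
  have forward : q ^ (lam + α₁) * q ^ (lam + α₂) = q ^ lam * q ^ lam * q ^ (α₁ + α₂) := by
    rw [Real.rpow_add hq, Real.rpow_add hq, Real.rpow_add hq, mul_mul_mul_comm]
  have backward : q ^ lam * g (x / q) = x ^ lam * S (x / q) := by
    rw [hg _ (div_pos hx hq), Real.div_rpow hx.le hq.le, ← mul_assoc, mul_div_cancel₀ _ hL]
  refine (mul_eq_zero_iff_left hL).symm.trans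
    ((Eq.congr_left ?_).trans (mul_eq_zero_iff_left hX))
  rw [hg x hx, hg _ (mul_pos hq hx), Real.mul_rpow hq.le hx.le, qHyperOp_apply]
  linear_combination (x - q ^ (h₁ + 1/2) * t₁) * (x - q ^ (h₂ + 1/2) * t₂) * backward
    - x ^ lam * (x - q ^ (l₁ - 1/2) * t₁) * (x - q ^ (l₂ - 1/2) * t₂) * S (q * x) * forward
    + x ^ lam * S x * (x ^ 2 * leading
      + x * rpow_lam_mul_linear_coeff (t₁ := t₁) (t₂ := t₂) hq hlam
      - rpow_lam_mul_constant_coeff (t₁ := t₁) (t₂ := t₂) hq hlam)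

end Equation

theorem stmt0
    (q h₁ h₂ l₁ l₂ α₁ α₂ t₁ t₂ hᵢ hᵢ' lᵢ lᵢ' tᵢ tᵢ' lam : ℝ) (N : ℕ)
    (hq : 0 < q) (hq1 : q ≠ 1) (ht₁ : t₁ ≠ 0) (ht₂ : t₂ ≠ 0)
    (hidx : (hᵢ, hᵢ', lᵢ, lᵢ', tᵢ, tᵢ') = (h₁, h₂, l₁, l₂, t₁, t₂) ∨
            (hᵢ, hᵢ', lᵢ, lᵢ', tᵢ, tᵢ') = (h₂, h₁, l₂, l₁, t₂, t₁))
    (hlam : lam = (h₁ + h₂ - l₁ - l₂ - α₁ - α₂ + 1) / 2)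
    (hN : 0 < N) (hNlam : lam + α₁ = -(N : ℝ))
    (hden : ∀ n : ℕ, 1 ≤ n → n ≤ N →
      q ^ (hᵢ - lᵢ + (n : ℝ)) ≠ 1 ∧ q ^ (hᵢ - lᵢ' + (n : ℝ)) * tᵢ / tᵢ' ≠ 1) :
    qHyperVar2 q h₁ h₂ l₁ l₂ α₁ α₂ t₁ t₂ (fun x =>
      x ^ lam * ∑ n ∈ Finset.range (N + 1),
        qPoch q (q ^ (lam + α₁)) n * qPoch q (q ^ (lam + α₂)) n /
            (qPoch q (q ^ (hᵢ - lᵢ + 1)) n * qPoch q (q ^ (hᵢ - lᵢ' + 1) * tᵢ / tᵢ') n *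
              qPoch q q n) *
          qPoch q (q ^ (hᵢ + 1/2) * tᵢ / x) n * (x / (q ^ (hᵢ' - 1/2) * tᵢ')) ^ n) := by
  obtain ⟨hlam', ht, ht', hswap⟩ :
      lam = (hᵢ + hᵢ' - lᵢ - lᵢ' - α₁ - α₂ + 1) / 2 ∧ tᵢ ≠ 0 ∧ tᵢ' ≠ 0 ∧
        ∀ g, qHyperVar2 q hᵢ hᵢ' lᵢ lᵢ' α₁ α₂ tᵢ tᵢ' g →
          qHyperVar2 q h₁ h₂ l₁ l₂ α₁ α₂ t₁ t₂ g := by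
    simp only [Prod.mk.injEq] at hidx
    rcases hidx with ⟨rfl, rfl, rfl, rfl, rfl, rfl⟩ | ⟨rfl, rfl, rfl, rfl, rfl, rfl⟩
    · exact ⟨hlam, ht₁, ht₂, fun _ => id⟩
    · exact ⟨by rw [hlam]; ring, ht₂, ht₁, fun _ => qHyperVar2_swap⟩
  have hroot (s : ℝ) {t : ℝ} : t ≠ 0 → q ^ s * t ≠ 0 :=
    mul_ne_zero (Real.rpow_pos_of_pos hq s).ne'
  have hterminate : q ^ (lam + α₁) * q ^ N = 1 := by
    rw [hNlam, ← Real.rpow_add_natCast hq.ne', neg_add_cancel, Real.rpow_zero]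
  refine hswap _ ((qHyperVar2_iff_qHyperOp_eq_zero hq hlam' fun x hx => ?_).2 fun x _ =>
    qHyperOp_qHyperCoeff_sum_eq_zero hq hq1 (hroot _ ht') (hroot _ ht) (hroot _ ht')
      (root_mul_root_eq hq hlam') hterminate (fun n hn => ?_) (fun n hn => ?_) x)
  · rw [← sum_qHyperCoeff_eq_sum_smul_qSubPow hx.ne', ← rpow_mul_div_eq_root_div_root hq,
      ← rpow_mul_div_eq_root_div_root hq, mul_div_cancel_right₀ _ ht,
      ← rpow_sub_half_mul_eq hq]
    rfl
  · rw [← rpow_natCast_succ_mul_div_eq hq, mul_div_cancel_right₀ _ ht]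
    exact (hden (n + 1) n.succ_pos hn).1
  · rw [← rpow_natCast_succ_mul_div_eq hq]
    exact (hden (n + 1) n.succ_pos hn).2
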